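/- arXiv:2212.01919 — 3 statements merged into one kernel-verified Lean document; each statement's English description precedes it below -/
import Mathlib

section
/- Let X ⊆ (ℂ^n,0) be a germ of an analytic variety and f ∈ m a holomorphic function germ. If the pair (f, X) is relatively quasihomogeneous with respect to some weights w ∈ ℚ_+^n, then f ∈ df(Θ_X); in particular, if μ_X(f) < ∞, then μ_X(f) = τ_X(f). -/
open Filter Topology Polynomial

set_option maxHeartbeats 1000000
set_option synthInstance.maxHeartbeats 1000000

noncomputable section

/-- The algebra structure on germs of complex valued functions. -/
instance Filter.Germ.instAlgebraComplex {α : Type*} (l : Filter α) :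
    Algebra ℂ (Filter.Germ l ℂ) where
  algebraMap := (Filter.Germ.coeRingHom l).comp (algebraMap ℂ (α → ℂ))
  commutes' := fun c g => mul_comm _ _
  smul_def' := fun c g => Filter.Germ.inductionOn g fun f => rfl

/-- The local algebra `𝒪ₙ` of germs at `0 ∈ ℂⁿ` of holomorphic functions,
realized as the subalgebra of germs at `0` admitting an analytic representative. -/
def On (n : ℕ) : Subalgebra ℂ (Filter.Germ (𝓝 (0 : Fin n → ℂ)) ℂ) where
  carrier := {g | ∃ f : (Fin n → ℂ) → ℂ,
    AnalyticAt ℂ f 0 ∧ (f : Filter.Germ (𝓝 (0 : Fin n → ℂ)) ℂ) = g}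
  mul_mem' := by
    rintro a b ⟨f, hf, rfl⟩ ⟨g, hg, rfl⟩
    exact ⟨f * g, hf.mul hg, rfl⟩
  add_mem' := by
    rintro a b ⟨f, hf, rfl⟩ ⟨g, hg, rfl⟩
    exact ⟨f + g, hf.add hg, rfl⟩
  algebraMap_mem' := fun c => ⟨fun _ => c, analyticAt_const, rfl⟩

variable {n : ℕ}

/-- Existence of an analytic representative for an element of `𝒪ₙ`. -/
lemma On.exists_rep (g : On n) : ∃ f : (Fin n → ℂ) → ℂ,
    AnalyticAt ℂ f 0 ∧ (f : Filter.Germ (𝓝 (0 : Fin n → ℂ)) ℂ) = (g : Filter.Germ _ ℂ) :=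
  g.2

/-- A chosen analytic representative of a germ in `𝒪ₙ`. -/
def On.rep (g : On n) : (Fin n → ℂ) → ℂ := (On.exists_rep g).choose

lemma On.rep_analyticAt (g : On n) : AnalyticAt ℂ (On.rep g) 0 :=
  (On.exists_rep g).choose_spec.1

lemma On.rep_spec (g : On n) :
    (On.rep g : Filter.Germ (𝓝 (0 : Fin n → ℂ)) ℂ) = (g : Filter.Germ _ ℂ) :=
  (On.exists_rep g).choose_spec.2

/-- Build an element of `𝒪ₙ` from an analytic function. -/
def mkOn {n : ℕ} (f : (Fin n → ℂ) → ℂ) (hf : AnalyticAt ℂ f 0) : On n :=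
  ⟨(f : Filter.Germ (𝓝 (0 : Fin n → ℂ)) ℂ), ⟨f, hf, rfl⟩⟩

/-- The `i`-th partial derivative, as an operation on `𝒪ₙ`. -/
def pd (i : Fin n) (g : On n) : On n :=
  mkOn (fun x => fderiv ℂ (On.rep g) x (Pi.single i 1)) (by
    have h := ((ContinuousLinearMap.apply ℂ ℂ (Pi.single i 1)).analyticAt
      (fderiv ℂ (On.rep g) 0)).comp (On.rep_analyticAt g).fderiv
    exact h)

/-- Restriction of germs at `0` to germs along a finer filter. -/
def restrictGerm {l : Filter (Fin n → ℂ)} (hl : l ≤ 𝓝 (0 : Fin n → ℂ)) :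
    Filter.Germ (𝓝 (0 : Fin n → ℂ)) ℂ →+* Filter.Germ l ℂ where
  toFun g := g.compTendsto id (Filter.tendsto_id'.2 hl)
  map_one' := rfl
  map_mul' a b := Filter.Germ.inductionOn₂ a b fun f g => rfl
  map_zero' := rfl
  map_add' a b := Filter.Germ.inductionOn₂ a b fun f g => rfl

/-- Evaluation of germs restricted along `l ≤ 𝓝 0`, as a ring homomorphism on `𝒪ₙ`. -/
def restrictOn (n : ℕ) {l : Filter (Fin n → ℂ)} (hl : l ≤ 𝓝 (0 : Fin n → ℂ)) :
    On n →+* Filter.Germ l ℂ :=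
  (restrictGerm hl).comp (On n).val.toRingHom

/-- The ideal `I_X ⊆ 𝒪ₙ` of germs vanishing on a set `X` near `0`. -/
def IX (n : ℕ) (X : Set (Fin n → ℂ)) : Ideal (On n) :=
  RingHom.ker (restrictOn n (nhdsWithin_le_nhds (s := X)))

/-- The maximal ideal `𝔪 ⊂ 𝒪ₙ` of germs vanishing at the origin. -/
def mId (n : ℕ) : Ideal (On n) :=
  RingHom.ker (restrictOn n (pure_le_nhds (0 : Fin n → ℂ)))

/-- `X` is the germ at `0` of an analytic variety: `0 ∈ X` and, near `0`, `X` coincides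
with the common zero locus of finitely many holomorphic functions. -/
def IsAnalyticGermAt0 (n : ℕ) (X : Set (Fin n → ℂ)) : Prop :=
  (0 : Fin n → ℂ) ∈ X ∧
    ∃ (m : ℕ) (g : Fin m → (Fin n → ℂ) → ℂ),
      (∀ j, AnalyticAt ℂ (g j) 0) ∧
      ∀ᶠ x in 𝓝 (0 : Fin n → ℂ), (x ∈ X ↔ ∀ j, g j x = 0)

/-- The action `δ(g) = Σ δᵢ ∂g/∂xᵢ` of a vector field `δ ∈ Θ ≅ 𝒪ₙⁿ` on `g ∈ 𝒪ₙ`. -/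
def applyVF (δ : Fin n → On n) (g : On n) : On n := ∑ i, δ i * pd i g

lemma applyVF_add (a b : Fin n → On n) (g : On n) :
    applyVF (a + b) g = applyVF a g + applyVF b g := by
  simp [applyVF, add_mul, Finset.sum_add_distrib]

lemma applyVF_smul (c : On n) (a : Fin n → On n) (g : On n) :
    applyVF (c • a) g = c * applyVF a g := by
  simp [applyVF, Finset.mul_sum, smul_eq_mul, mul_assoc]

/-- For fixed `f`, the map `δ ↦ δ(f)` as an `𝒪ₙ`-linear map `Θ → 𝒪ₙ`. -/
def gradMap (n : ℕ) (f : On n) : (Fin n → On n) →ₗ[On n] On n where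
  toFun δ := applyVF δ f
  map_add' a b := applyVF_add a b f
  map_smul' c a := applyVF_smul c a f

/-- The module `Θ_X` of logarithmic vector fields of `X`, i.e. vector fields
preserving the ideal `I_X`. -/
def ThetaX (n : ℕ) (X : Set (Fin n → ℂ)) : Submodule (On n) (Fin n → On n) where
  carrier := {δ | ∀ g ∈ IX n X, applyVF δ g ∈ IX n X}
  add_mem' := by
    intro a b ha hb g hg
    rw [applyVF_add]
    exact Ideal.add_mem _ (ha g hg) (hb g hg)
  zero_mem' := by
    intro g hg
    have h0 : applyVF (0 : Fin n → On n) g = 0 := by simp [applyVF]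
    rw [h0]; exact Ideal.zero_mem _
  smul_mem' := by
    intro c a ha g hg
    rw [applyVF_smul]
    exact Ideal.mul_mem_left _ _ (ha g hg)

/-- The module `Θ_Y` of vector fields tangent to the hypersurface `Y = f⁻¹(0)`,
i.e. `δ(f) ∈ ⟨f⟩`. -/
def ThetaF (n : ℕ) (f : On n) : Submodule (On n) (Fin n → On n) :=
  Submodule.comap (gradMap n f) (Ideal.span {f})

/-- The module `H_Y` of Hamiltonian vector fields of `f`, i.e. `δ(f) = 0`. -/
def HamF (n : ℕ) (f : On n) : Submodule (On n) (Fin n → On n) :=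
  LinearMap.ker (gradMap n f)

/-- The Bruce–Roberts ideal `df(Θ_X) ⊆ 𝒪ₙ`. -/
def BRIdeal (n : ℕ) (X : Set (Fin n → ℂ)) (f : On n) : Ideal (On n) :=
  Submodule.map (gradMap n f) (ThetaX n X)

/-- The Jacobian ideal `J(f) = ⟨∂f/∂x₁, …, ∂f/∂xₙ⟩`. -/
def Jac (n : ℕ) (f : On n) : Ideal (On n) :=
  Ideal.span (Set.range fun i => pd i f)

/-- The ideal `J(f,h)` generated by the `2×2` minors of the Jacobian matrix of `(f,h)`. -/
def Jmin (n : ℕ) (f h : On n) : Ideal (On n) :=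
  Ideal.span (Set.range fun p : Fin n × Fin n => pd p.1 f * pd p.2 h - pd p.2 f * pd p.1 h)

/-- The Milnor number `μ(f)`. -/
def mu (n : ℕ) (f : On n) : ℕ := Module.finrank ℂ (On n ⧸ Jac n f)

/-- The Tjurina number `τ(f)`. -/
def tau (n : ℕ) (f : On n) : ℕ :=
  Module.finrank ℂ (On n ⧸ (Jac n f + Ideal.span {f}))

/-- The Bruce–Roberts Milnor number `μ_X(f)`. -/
def muX (n : ℕ) (X : Set (Fin n → ℂ)) (f : On n) : ℕ :=
  Module.finrank ℂ (On n ⧸ BRIdeal n X f)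

/-- The Bruce–Roberts Tjurina number `τ_X(f)`. -/
def tauX (n : ℕ) (X : Set (Fin n → ℂ)) (f : On n) : ℕ :=
  Module.finrank ℂ (On n ⧸ (BRIdeal n X f + Ideal.span {f}))

/-- The value at the origin of a germ in `𝒪ₙ`. -/
def ev0 (g : On n) : ℂ := On.rep g 0

/-- The linear part `j¹δ` of a vector field `δ`, as the matrix `(∂δⱼ/∂xᵢ)(0)`. -/
def linPart (δ : Fin n → On n) : Matrix (Fin n) (Fin n) ℂ :=
  Matrix.of fun i j => ev0 (pd i (δ j))

/-- The eigenvalues (with multiplicities) of the linear part of `δ` are given by `w`. -/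
def EigsEq (δ : Fin n → On n) (w : Fin n → ℚ) : Prop :=
  (linPart δ).charpoly = ∏ i, (Polynomial.X - Polynomial.C ((w i : ℂ)))

/-- The germ at `0` of the coordinate function `xᵢ`. -/
def coordG (i : Fin n) : On n :=
  mkOn (fun x : Fin n → ℂ => x i)
    ((ContinuousLinearMap.proj (R := ℂ) (φ := fun _ : Fin n => ℂ) i).analyticAt _)

/-- `g` is quasihomogeneous of degree `d` with respect to the weights `w` (in the given
coordinates): the Euler identity `Σ wᵢ xᵢ ∂g/∂xᵢ = d g` holds. -/
def IsQH (n : ℕ) (w : Fin n → ℚ) (d : ℚ) (g : On n) : Prop :=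
  ∑ i, (w i : ℂ) • (coordG i * pd i g) = (d : ℂ) • g

/-- A germ of a biholomorphic change of coordinates at `0 ∈ ℂⁿ`. -/
structure CoordChange (n : ℕ) where
  toFun : (Fin n → ℂ) → (Fin n → ℂ)
  invFun : (Fin n → ℂ) → (Fin n → ℂ)
  analyticAt : AnalyticAt ℂ toFun 0
  inv_analyticAt : AnalyticAt ℂ invFun 0
  map_zero : toFun 0 = 0
  inv_map_zero : invFun 0 = 0
  left_inv : ∀ᶠ x in 𝓝 (0 : Fin n → ℂ), invFun (toFun x) = x
  right_inv : ∀ᶠ x in 𝓝 (0 : Fin n → ℂ), toFun (invFun x) = x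

lemma CoordChange.tendsto (φ : CoordChange n) :
    Filter.Tendsto φ.toFun (𝓝 (0 : Fin n → ℂ)) (𝓝 (0 : Fin n → ℂ)) := by
  have h := φ.analyticAt.continuousAt
  rwa [ContinuousAt, φ.map_zero] at h

/-- The pullback (composition) of a germ `g ∈ 𝒪ₙ` under a change of coordinates. -/
def pullback (φ : CoordChange n) (g : On n) : On n :=
  ⟨(g : Filter.Germ (𝓝 (0 : Fin n → ℂ)) ℂ).compTendsto φ.toFun φ.tendsto, by
    refine ⟨On.rep g ∘ φ.toFun, ?_, ?_⟩
    · have h := On.rep_analyticAt g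
      rw [← φ.map_zero] at h
      exact h.comp φ.analyticAt
    · rw [← On.rep_spec g]
      exact (Filter.Germ.coe_compTendsto _ φ.tendsto).symm⟩

/-- Definition 1.1: the pair `(f, X)` is relatively quasihomogeneous with respect to the
weights `w`: in suitable coordinates, `f` is quasihomogeneous of degree `1` and `I_X` admits
a system of quasihomogeneous generators of positive degrees, all with respect to `w`. -/
def RelQH (n : ℕ) (X : Set (Fin n → ℂ)) (f : On n) (w : Fin n → ℚ) : Prop :=
  ∃ φ : CoordChange n,
    IsQH n w 1 (pullback φ f) ∧
    ∃ (m : ℕ) (h : Fin m → On n) (d : Fin m → ℚ),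
      Ideal.span (Set.range h) = IX n X ∧ (∀ j, 0 < d j) ∧
      ∀ j, IsQH n w (d j) (pullback φ (h j))

/-- The variety `X` is quasihomogeneous with respect to the weights `w`: in suitable
coordinates, `I_X` admits a system of quasihomogeneous generators of positive degrees. -/
def VarQH (n : ℕ) (X : Set (Fin n → ℂ)) (w : Fin n → ℚ) : Prop :=
  ∃ φ : CoordChange n,
    ∃ (m : ℕ) (h : Fin m → On n) (d : Fin m → ℚ),
      Ideal.span (Set.range h) = IX n X ∧ (∀ j, 0 < d j) ∧
      ∀ j, IsQH n w (d j) (pullback φ (h j))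

instance (f : On n) : HasQuotient (↥(ThetaF n f)) (Submodule ↥(On n) ↥(ThetaF n f)) :=
  Submodule.hasQuotient (R := On n) (M := ThetaF n f)


lemma rep_eventuallyEq {g : On n} {F : (Fin n → ℂ) → ℂ}
    (h : (F : Filter.Germ (𝓝 (0 : Fin n → ℂ)) ℂ) = (g : Filter.Germ _ ℂ)) :
    On.rep g =ᶠ[𝓝 0] F := by
  have := (On.rep_spec g).trans h.symm
  exact Filter.Germ.coe_eq.1 this

lemma On_ext_rep {g h : On n} (H : On.rep g =ᶠ[𝓝 0] On.rep h) : g = h := by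
  apply Subtype.ext
  rw [← On.rep_spec g, ← On.rep_spec h]
  exact Filter.Germ.coe_eq.2 H

lemma rep_mkOn (F : (Fin n → ℂ) → ℂ) (hF : AnalyticAt ℂ F 0) :
    On.rep (mkOn F hF) =ᶠ[𝓝 0] F := rep_eventuallyEq rfl

lemma rep_mul (a b : On n) : On.rep (a * b) =ᶠ[𝓝 0] On.rep a * On.rep b := by
  apply rep_eventuallyEq
  rw [Filter.Germ.coe_mul, On.rep_spec, On.rep_spec]; rfl

lemma rep_add (a b : On n) : On.rep (a + b) =ᶠ[𝓝 0] On.rep a + On.rep b := by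
  apply rep_eventuallyEq
  rw [Filter.Germ.coe_add, On.rep_spec, On.rep_spec]; rfl

lemma rep_zero : On.rep (0 : On n) =ᶠ[𝓝 0] (fun _ => 0) := by
  apply rep_eventuallyEq
  rfl

lemma rep_smul (c : ℂ) (a : On n) : On.rep (c • a) =ᶠ[𝓝 0] fun x => c * On.rep a x := by
  apply rep_eventuallyEq
  have : ((c • a : On n) : Filter.Germ (𝓝 (0 : Fin n → ℂ)) ℂ) = c • (a : Filter.Germ _ ℂ) := rfl
  rw [this, ← On.rep_spec a]
  rfl

lemma rep_sum {ι : Type*} (s : Finset ι) (a : ι → On n) :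
    On.rep (∑ i ∈ s, a i) =ᶠ[𝓝 0] fun x => ∑ i ∈ s, On.rep (a i) x := by
  classical
  induction s using Finset.induction_on with
  | empty => simpa using rep_zero
  | insert i s hi ih =>
    rw [Finset.sum_insert hi]
    filter_upwards [rep_add (a i) (∑ j ∈ s, a j), ih] with x h1 h2
    rw [h1, Pi.add_apply, h2, Finset.sum_insert hi]

lemma rep_pullback (φ : CoordChange n) (g : On n) :
    On.rep (pullback φ g) =ᶠ[𝓝 0] On.rep g ∘ φ.toFun := by
  apply rep_eventuallyEq
  change _ = (g : Filter.Germ (𝓝 (0 : Fin n → ℂ)) ℂ).compTendsto φ.toFun φ.tendsto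
  rw [← On.rep_spec g]
  exact (Filter.Germ.coe_compTendsto _ φ.tendsto).symm

lemma sum_single_fderiv (L : (Fin n → ℂ) →L[ℂ] ℂ) (v : Fin n → ℂ) :
    ∑ i, v i * L (Pi.single i 1) = L v := by
  conv_rhs => rw [pi_eq_sum_univ' v]
  simp [map_sum]

lemma rep_applyVF (δ : Fin n → On n) (g : On n) :
    On.rep (applyVF δ g) =ᶠ[𝓝 0]
      fun x => fderiv ℂ (On.rep g) x (fun i => On.rep (δ i) x) := by
  have h1 := rep_sum Finset.univ (fun i => δ i * pd i g)
  have h2 : ∀ᶠ x in 𝓝 (0 : Fin n → ℂ), ∀ i, On.rep (δ i * pd i g) x =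
      On.rep (δ i) x * fderiv ℂ (On.rep g) x (Pi.single i 1) := by
    rw [Filter.eventually_all]
    intro i
    filter_upwards [rep_mul (δ i) (pd i g), rep_mkOn (fun x => fderiv ℂ (On.rep g) x
      (Pi.single i 1)) (by
        have h := ((ContinuousLinearMap.apply ℂ ℂ (Pi.single i 1)).analyticAt
          (fderiv ℂ (On.rep g) 0)).comp (On.rep_analyticAt g).fderiv
        exact h)] with x h3 h4
    rw [h3, Pi.mul_apply]
    congr 1
  filter_upwards [h1, h2] with x h1 h2
  change On.rep (∑ i, δ i * pd i g) x = _
  rw [h1, ← sum_single_fderiv]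
  exact Finset.sum_congr rfl fun i _ => h2 i

lemma applyVF_mul_germ (δ : Fin n → On n) (a b : On n) :
    applyVF δ (a * b) = a * applyVF δ b + b * applyVF δ a := by
  apply On_ext_rep
  have da := (On.rep_analyticAt a).eventually_analyticAt
  have db := (On.rep_analyticAt b).eventually_analyticAt
  filter_upwards [rep_applyVF δ (a * b), rep_applyVF δ a, rep_applyVF δ b, da, db,
    rep_add (a * applyVF δ b) (b * applyVF δ a), rep_mul a (applyVF δ b),
    rep_mul b (applyVF δ a), (rep_mul a b).fderiv (𝕜 := ℂ)] with x h1 h2 h3 h4 h5 h6 h7 h8 h9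
  rw [h1, h6, Pi.add_apply, h7, h8, Pi.mul_apply, Pi.mul_apply, h2, h3, h9,
    fderiv_mul h4.differentiableAt h5.differentiableAt]
  simp

lemma applyVF_add_germ (δ : Fin n → On n) (a b : On n) :
    applyVF δ (a + b) = applyVF δ a + applyVF δ b := by
  apply On_ext_rep
  have da := (On.rep_analyticAt a).eventually_analyticAt
  have db := (On.rep_analyticAt b).eventually_analyticAt
  filter_upwards [rep_applyVF δ (a + b), rep_applyVF δ a, rep_applyVF δ b, da, db,
    rep_add (applyVF δ a) (applyVF δ b), (rep_add a b).fderiv (𝕜 := ℂ)]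
    with x h1 h2 h3 h4 h5 h6 h9
  rw [h1, h6, Pi.add_apply, h2, h3, h9,
    fderiv_add h4.differentiableAt h5.differentiableAt]
  simp

lemma applyVF_zero_germ (δ : Fin n → On n) : applyVF δ (0 : On n) = 0 := by
  have := applyVF_add_germ δ 0 0
  simpa using this

/-- The Euler identity, in terms of representatives. -/
lemma IsQH.eventually {w : Fin n → ℚ} {d : ℚ} {g : On n} (h : IsQH n w d g) :
    ∀ᶠ x in 𝓝 (0 : Fin n → ℂ),
      fderiv ℂ (On.rep g) x (fun i => (w i : ℂ) * x i) = (d : ℂ) * On.rep g x := by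
  have e : applyVF (fun i => (w i : ℂ) • coordG i) g = (d : ℂ) • g := by
    rw [← h]
    simp [applyVF]
  have h1 : ∀ᶠ x in 𝓝 (0 : Fin n → ℂ), ∀ i,
      On.rep ((w i : ℂ) • (coordG i : On n)) x = (w i : ℂ) * x i := by
    rw [Filter.eventually_all]
    intro i
    filter_upwards [rep_smul (w i : ℂ) (coordG i : On n), rep_mkOn (fun x : Fin n → ℂ => x i)
      ((ContinuousLinearMap.proj (R := ℂ) (φ := fun _ : Fin n => ℂ) i).analyticAt _)]
      with x h2 h3
    rw [h2]
    congr 1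
  have h4 := rep_applyVF (fun i => (w i : ℂ) • coordG i) g
  rw [e] at h4
  filter_upwards [h1, h4, rep_smul (d : ℂ) g] with x h1 h4 h5
  rw [← h5, h4]
  congr 1
  ext i
  exact (h1 i).symm

/-- The Euler field transported by the change of coordinates. -/
def eulerFun (φ : CoordChange n) (w : Fin n → ℚ) (x : Fin n → ℂ) : Fin n → ℂ :=
  fderiv ℂ φ.toFun (φ.invFun x) (fun i => (w i : ℂ) * φ.invFun x i)

lemma eulerFun_analyticAt (φ : CoordChange n) (w : Fin n → ℚ) :
    AnalyticAt ℂ (eulerFun φ w) 0 := by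
  have h1 : AnalyticAt ℂ (fderiv ℂ φ.toFun) (φ.invFun 0) := by
    rw [φ.inv_map_zero]; exact φ.analyticAt.fderiv
  have h2 : AnalyticAt ℂ (fun x => fderiv ℂ φ.toFun (φ.invFun x)) 0 :=
    h1.comp φ.inv_analyticAt
  have h3 : AnalyticAt ℂ (fun x => (fun i => (w i : ℂ) * φ.invFun x i : Fin n → ℂ)) 0 := by
    rw [analyticAt_pi_iff]
    intro i
    exact analyticAt_const.mul ((analyticAt_pi_iff.1 φ.inv_analyticAt) i)
  exact ((ContinuousLinearMap.id ℂ ((Fin n → ℂ) →L[ℂ] (Fin n → ℂ))).analyticAt_bilinear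
    (_, _)).comp₂ h2 h3

def eulerVF (φ : CoordChange n) (w : Fin n → ℚ) (i : Fin n) : On n :=
  mkOn (fun x => eulerFun φ w x i) ((analyticAt_pi_iff.1 (eulerFun_analyticAt φ w)) i)

lemma applyVF_eulerVF (φ : CoordChange n) {w : Fin n → ℚ} {d : ℚ} {g : On n}
    (h : IsQH n w d (pullback φ g)) : applyVF (eulerVF φ w) g = (d : ℂ) • g := by
  have hψ : Tendsto φ.invFun (𝓝 0) (𝓝 0) := by
    have h := φ.inv_analyticAt.continuousAt
    rwa [ContinuousAt, φ.inv_map_zero] at h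
  have hV : ∀ᶠ x in 𝓝 (0 : Fin n → ℂ), ∀ i, On.rep (eulerVF φ w i) x = eulerFun φ w x i := by
    rw [Filter.eventually_all]
    intro i
    exact rep_mkOn _ _
  apply On_ext_rep
  filter_upwards [rep_applyVF (eulerVF φ w) g, rep_smul (d : ℂ) g, hV, φ.right_inv,
    hψ.eventually h.eventually, hψ.eventually (rep_pullback φ g),
    hψ.eventually ((rep_pullback φ g).fderiv (𝕜 := ℂ)),
    (On.rep_analyticAt g).eventually_analyticAt,
    hψ.eventually φ.analyticAt.eventually_analyticAt] with x h1 h2 h3 h4 h5 h6 h7 h8 h9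
  have h8' : DifferentiableAt ℂ (On.rep g) (φ.toFun (φ.invFun x)) := by
    rw [h4]; exact h8.differentiableAt
  rw [h6, h7, fderiv_comp _ h8' h9.differentiableAt, Function.comp_apply, h4] at h5
  rw [h1, h2, ← h5, funext h3]
  rfl

/-- If the pair `(f, X)` is relatively quasihomogeneous with respect to some positive
rational weights, then `f ∈ df(Θ_X)`; in particular, if `μ_X(f) < ∞` then
`μ_X(f) = τ_X(f)`. -/
theorem relQH_imp_mem_BRIdeal (n : ℕ) (X : Set (Fin n → ℂ))
    (hX : IsAnalyticGermAt0 n X) (f : On n) (hf : f ∈ mId n)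
    (w : Fin n → ℚ) (hw : ∀ i, 0 < w i) (hqh : RelQH n X f w) :
    f ∈ BRIdeal n X f ∧
      (FiniteDimensional ℂ (On n ⧸ BRIdeal n X f) → muX n X f = tauX n X f) := by
  obtain ⟨φ, hfq, m, h, d, hspan, -, hq⟩ := hqh
  have hmem : f ∈ BRIdeal n X f := by
    refine ⟨eulerVF φ w, ?_, ?_⟩
    · intro g hg
      rw [← hspan] at hg ⊢
      induction hg using Submodule.span_induction with
      | mem x hx =>
        obtain ⟨j, rfl⟩ := hx
        rw [applyVF_eulerVF φ (hq j), Algebra.smul_def]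
        exact Ideal.mul_mem_left _ _ (Ideal.subset_span ⟨j, rfl⟩)
      | zero => rw [applyVF_zero_germ]; exact Ideal.zero_mem _
      | add x y _ _ hx hy => rw [applyVF_add_germ]; exact Ideal.add_mem _ hx hy
      | smul a x hxm hx =>
        rw [smul_eq_mul, applyVF_mul_germ]
        exact Ideal.add_mem _ (Ideal.mul_mem_left _ _ hx) (Ideal.mul_mem_right _ _ hxm)
    · have := applyVF_eulerVF φ hfq
      rw [Rat.cast_one, one_smul] at this
      exact this
  refine ⟨hmem, fun _ => ?_⟩
  have e : BRIdeal n X f + Ideal.span {f} = BRIdeal n X f := by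
    rw [Submodule.add_eq_sup, sup_eq_left, Ideal.span_le]
    simpa using hmem
  unfold muX tauX
  rw [e]

end
end

section
/- Let X ⊆ (ℂ^n,0) be a germ of an analytic variety and f ∈ O_n with μ_X(f) < ∞, and set Y = f^{-1}(0). Then τ_X(f) = τ(f) + dim_ℂ Θ/(Θ_X + Θ_Y). -/
open Filter Topology Polynomial

set_option maxHeartbeats 1000000
set_option synthInstance.maxHeartbeats 1000000

noncomputable section

variable {n : ℕ}

/-- The abstract dimension count behind the decomposition. -/
theorem finrank_quot_decomp {K R M : Type*} [Field K] [CommRing R] [Algebra K R]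
    [AddCommGroup M] [Module R M] [Module K M] [IsScalarTower K R M]
    (φ : M →ₗ[R] R) (N : Submodule R M) (I J : Ideal R) (hJ : LinearMap.range φ = J)
    (hfin : FiniteDimensional K (R ⧸ (Submodule.map φ N : Ideal R))) :
    Module.finrank K (R ⧸ ((Submodule.map φ N : Ideal R) + I)) =
      Module.finrank K (R ⧸ (J + I)) +
        Module.finrank K (M ⧸ (N ⊔ Submodule.comap φ I)) := by
  subst hJ
  set B : Ideal R := Submodule.map φ N with hB
  have hle : B + I ≤ (LinearMap.range φ : Ideal R) + I :=
    sup_le_sup_right LinearMap.map_le_range I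
  have hBle : B ≤ B + I := le_sup_left
  have hcomap : N ⊔ Submodule.comap φ I = Submodule.comap φ (B + I) := by
    apply le_antisymm
    · refine sup_le ?_ (Submodule.comap_mono le_sup_right)
      intro x hx
      exact Submodule.mem_sup_left (Submodule.mem_map_of_mem hx)
    · intro x hx
      obtain ⟨b, hb, c, hc, hbc⟩ := Submodule.mem_sup.1 (Submodule.mem_comap.1 hx)
      obtain ⟨y, hy, rfl⟩ := Submodule.mem_map.1 hb
      refine Submodule.mem_sup.2 ⟨y, hy, x - y, ?_, by abel⟩
      rw [Submodule.mem_comap, map_sub, ← hbc]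
      simpa using hc
  let p : (R ⧸ (B + I)) →ₗ[R] (R ⧸ ((LinearMap.range φ : Ideal R) + I)) :=
    Submodule.factor hle
  let q : (M ⧸ (N ⊔ Submodule.comap φ I)) →ₗ[R] (R ⧸ (B + I)) :=
    Submodule.mapQ _ _ φ hcomap.le
  let r : (R ⧸ B) →ₗ[R] (R ⧸ (B + I)) := Submodule.factor hBle
  have hr : Function.Surjective r := Submodule.factor_surjective hBle
  have hp : Function.Surjective p := Submodule.factor_surjective hle
  haveI : FiniteDimensional K (R ⧸ (B + I)) :=
    Module.Finite.of_surjective (r.restrictScalars K) hr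
  have hq : Function.Injective q := by
    rw [← LinearMap.ker_eq_bot, Submodule.ker_mapQ, ← hcomap]
    exact Submodule.mkQ_map_self _
  have hker : LinearMap.ker (p.restrictScalars K) = LinearMap.range (q.restrictScalars K) := by
    ext z
    obtain ⟨z, rfl⟩ := Submodule.Quotient.mk_surjective _ z
    constructor
    · intro hz
      have hz' : z ∈ (LinearMap.range φ : Ideal R) + I :=
        (Submodule.Quotient.mk_eq_zero _).1 hz
      obtain ⟨b, ⟨y, rfl⟩, c, hc, hbc⟩ := Submodule.mem_sup.1 hz'
      refine ⟨Submodule.Quotient.mk y, ?_⟩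
      change Submodule.Quotient.mk (φ y) = _
      rw [Submodule.Quotient.eq, ← hbc]
      have : φ y - (φ y + c) = -c := by ring
      rw [this]
      exact neg_mem (Submodule.mem_sup_right hc)
    · rintro ⟨w, hw⟩
      obtain ⟨w, rfl⟩ := Submodule.Quotient.mk_surjective _ w
      rw [← hw]
      change Submodule.Quotient.mk (φ w) = _
      exact (Submodule.Quotient.mk_eq_zero _).2 (Submodule.mem_sup_left ⟨w, rfl⟩)
  have h1 := LinearMap.finrank_range_add_finrank_ker (p.restrictScalars K)
  have htop : LinearMap.range (p.restrictScalars K) = ⊤ := LinearMap.range_eq_top.2 hp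
  rw [hker, htop, finrank_top,
    LinearMap.finrank_range_of_inj (f := q.restrictScalars K) hq] at h1
  exact h1.symm

theorem range_gradMap (n : ℕ) (f : On n) : LinearMap.range (gradMap n f) = Jac n f := by
  apply le_antisymm
  · rintro _ ⟨δ, rfl⟩
    change ∑ i, δ i * pd i f ∈ Jac n f
    exact Ideal.sum_mem _ fun i _ =>
      Ideal.mul_mem_left (Jac n f) (δ i) (Ideal.subset_span (Set.mem_range_self i))
  · refine Ideal.span_le.2 ?_
    rintro _ ⟨i, rfl⟩
    refine ⟨Pi.single i 1, ?_⟩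
    change ∑ j, (Pi.single i 1 : Fin n → On n) j * pd j f = pd i f
    rw [Finset.sum_eq_single i]
    · simp
    · intro j _ hj
      simp [Pi.single_eq_of_ne hj]
    · simp

/-- Formula (3) of Proposition 2.1: `τ_X(f) = τ(f) + dim_ℂ Θ/(Θ_X + Θ_Y)`. -/
theorem tauX_decomposition (n : ℕ) (X : Set (Fin n → ℂ)) (hX : IsAnalyticGermAt0 n X)
    (f : On n) (hfin : FiniteDimensional ℂ (On n ⧸ BRIdeal n X f)) :
    tauX n X f = tau n f +
      Module.finrank ℂ ((Fin n → On n) ⧸ (ThetaX n X ⊔ ThetaF n f)) := by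
  exact finrank_quot_decomp (K := ℂ) (gradMap n f) (ThetaX n X) (Ideal.span {f}) (Jac n f)
    (range_gradMap n f) hfin

end
end

section
/- Let X ⊆ (ℂ^n,0) be a germ of an analytic variety and f ∈ O_n with μ_X(f) < ∞, and set Y = f^{-1}(0). Then μ_X(f) = τ_X(f) if and only if both μ(f) = τ(f) and Θ_Y = (Θ_X ∩ Θ_Y) + H_Y. -/
open Filter Topology Polynomial

set_option maxHeartbeats 1000000
set_option synthInstance.maxHeartbeats 1000000

noncomputable section

variable {n : ℕ}

/-- For `I ≤ K` with finite codimension of `I`, equal codimensions force `K ≤ I`. -/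
lemma le_of_finrank_quot_eq {A : Type*} [CommRing A] [Algebra ℂ A] (I K : Ideal A) (hIK : I ≤ K)
    (hfin : FiniteDimensional ℂ (A ⧸ I))
    (h : Module.finrank ℂ (A ⧸ I) = Module.finrank ℂ (A ⧸ K)) : K ≤ I := by
  have hs : Function.Surjective (Ideal.Quotient.factorₐ ℂ hIK).toLinearMap :=
    Ideal.Quotient.factor_surjective hIK
  haveI : FiniteDimensional ℂ (A ⧸ K) := Module.Finite.of_surjective _ hs
  have hi := (LinearMap.injective_iff_surjective_of_finrank_eq_finrank h).2 hs
  intro x hx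
  rw [← Ideal.Quotient.eq_zero_iff_mem]
  apply hi
  rw [map_zero]
  exact Ideal.Quotient.eq_zero_iff_mem.2 hx

lemma finrank_quot_eq_iff {A : Type*} [CommRing A] [Algebra ℂ A] (I : Ideal A) (f : A)
    (hfin : FiniteDimensional ℂ (A ⧸ I)) :
    Module.finrank ℂ (A ⧸ I) = Module.finrank ℂ (A ⧸ (I + Ideal.span {f})) ↔ f ∈ I := by
  constructor
  · intro h
    exact le_of_finrank_quot_eq I _ le_sup_left hfin h
      ((le_sup_right : Ideal.span {f} ≤ I + Ideal.span {f}) (Ideal.mem_span_singleton_self f))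
  · intro h
    have : I + Ideal.span {f} = I :=
      sup_eq_left.2 ((Ideal.span_singleton_le_iff_mem I).2 h)
    rw [this]

lemma mem_Jac_iff (f g : On n) : g ∈ Jac n f ↔ ∃ δ, gradMap n f δ = g := by
  unfold Jac
  rw [Ideal.mem_span_range_iff_exists_fun]
  rfl

/-- Corollary 2.2: `μ_X(f) = τ_X(f)` iff `μ(f) = τ(f)` and
`Θ_Y = (Θ_X ∩ Θ_Y) + H_Y`. -/
theorem muX_eq_tauX_iff (n : ℕ) (X : Set (Fin n → ℂ)) (hX : IsAnalyticGermAt0 n X)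
    (f : On n) (hfin : FiniteDimensional ℂ (On n ⧸ BRIdeal n X f)) :
    muX n X f = tauX n X f ↔
      (mu n f = tau n f ∧ ThetaF n f = (ThetaX n X ⊓ ThetaF n f) ⊔ HamF n f) := by
  have hBJ : BRIdeal n X f ≤ Jac n f := by
    rintro g ⟨δ, -, rfl⟩
    exact (mem_Jac_iff f _).2 ⟨δ, rfl⟩
  have hfinJ : FiniteDimensional ℂ (On n ⧸ Jac n f) :=
    Module.Finite.of_surjective (Ideal.Quotient.factorₐ ℂ hBJ).toLinearMap
      (Ideal.Quotient.factor_surjective hBJ)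
  have h1 : muX n X f = tauX n X f ↔ f ∈ BRIdeal n X f := finrank_quot_eq_iff _ f hfin
  have h2 : mu n f = tau n f ↔ f ∈ Jac n f := finrank_quot_eq_iff _ f hfinJ
  rw [h1, h2]
  constructor
  · intro hf
    refine ⟨hBJ hf, le_antisymm ?_ (sup_le inf_le_right ?_)⟩
    · intro δ hδ
      obtain ⟨η, hη, hηf⟩ := hf
      obtain ⟨a, ha⟩ := Ideal.mem_span_singleton'.1 (show gradMap n f δ ∈ Ideal.span {f} from hδ)
      have key : gradMap n f (a • η) = a * f := by
        rw [map_smul, hηf, smul_eq_mul]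
      refine Submodule.mem_sup.2 ⟨a • η, ⟨Submodule.smul_mem _ a hη, ?_⟩, δ - a • η, ?_, by abel⟩
      · show gradMap n f (a • η) ∈ Ideal.span {f}
        rw [key]
        exact Ideal.mem_span_singleton'.2 ⟨a, rfl⟩
      · show gradMap n f (δ - a • η) = 0
        rw [map_sub, key, ha, sub_self]
    · intro δ hδ
      have h0 : gradMap n f δ = 0 := hδ
      show gradMap n f δ ∈ Ideal.span {f}
      rw [h0]
      exact Ideal.zero_mem _
  · rintro ⟨hfJ, hT⟩
    obtain ⟨δ, hδ⟩ := (mem_Jac_iff f f).1 hfJ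
    have hδT : δ ∈ ThetaF n f := by
      show gradMap n f δ ∈ Ideal.span {f}
      rw [hδ]
      exact Ideal.mem_span_singleton_self f
    rw [hT] at hδT
    obtain ⟨η, hη, ξ, hξ, hs⟩ := Submodule.mem_sup.1 hδT
    have h0 : gradMap n f ξ = 0 := hξ
    refine ⟨η, hη.1, ?_⟩
    rw [← hs, map_add, h0, add_zero] at hδ
    exact hδ

end
end
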